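/- Let n be a positive integer and d the 2-adic valuation of n. Then every even element of the length spectrum of n has 2-adic valuation exactly d+1. -/

import Mathlib

/-- `IsDecomp n a m` means the `m` consecutive positive integers
`a+1, a+2, …, a+m` form a decomposition of `n`. -/
def IsDecomp (n a m : ℕ) : Prop :=
  1 ≤ m ∧ (Finset.range m).sum (fun i => a + i + 1) = n

/-- The length spectrum of `n`: the set of lengths of decompositions of `n`. -/
def Lspec (n : ℕ) : Set ℕ := {m | ∃ a, IsDecomp n a m}

theorem two_mul_sum_range_add_add_one {R : Type*} [CommSemiring R] (a : R) (m : ℕ) :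
    2 * ∑ i ∈ Finset.range m, (a + i + 1) = m * (2 * a + m + 1) := by
  induction m with
  | zero => simp
  | succ m ih =>
    rw [Finset.sum_range_succ, mul_add, ih]
    push_cast
    ring

theorem padicValNat_mul_of_not_dvd_right {p : ℕ} [Fact p.Prime] (m : ℕ) {b : ℕ} (hb : ¬p ∣ b) :
    padicValNat p (m * b) = padicValNat p m := by
  obtain rfl | hm := eq_or_ne m 0
  · rw [zero_mul]
  · have hb₀ : b ≠ 0 := fun h => hb (h ▸ dvd_zero p)
    rw [padicValNat.mul hm hb₀, padicValNat.eq_zero_of_not_dvd hb, add_zero]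

theorem IsDecomp.two_mul_eq {n a m : ℕ} (h : IsDecomp n a m) :
    2 * n = m * (2 * a + m + 1) := by
  rw [← h.2]
  exact two_mul_sum_range_add_add_one a m

/-- Let `n` be a positive integer and `d` the 2-adic valuation of `n`. Then
every even element of the length spectrum of `n` has 2-adic valuation exactly
`d + 1`. -/
theorem even_length_padic_valuation (n : ℕ) (hn : 0 < n) :
    ∀ m ∈ Lspec n, Even m → padicValNat 2 m = padicValNat 2 n + 1 := by
  rintro m ⟨a, h⟩ hm
  have hodd : Odd (2 * a + m + 1) := ((even_two_mul a).add hm).add_one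
  calc padicValNat 2 m
      = padicValNat 2 (m * (2 * a + m + 1)) :=
        (padicValNat_mul_of_not_dvd_right m hodd.not_two_dvd_nat).symm
    _ = padicValNat 2 (2 * n) := by rw [h.two_mul_eq]
    _ = padicValNat 2 n + 1 := padicValNat_base_mul one_lt_two hn.ne'
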